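/- Let D be a category and C ⊆ D a full subcategory (given by a fully faithful functor ι : C ⥤ D). Call a presheaf P : Dᵒᵖ ⥤ Type 'left Kan extended from C' if P, equipped with the identity natural transformation on its restriction ι.op ⋙ P, is a left Kan extension of ι.op ⋙ P along ι.op. Let F ⟶ G ⟵ H be natural transformations of presheaves on D. Assume: (1) H is left Kan extended from C, and (2) for every object U of C and every natural transformation from the representable presheaf y(ιU) to G, the pullback F ×_G y(ιU), computed in the presheaf category, is left Kan extended from C. Then the pullback F ×_G H is left Kan extended from C. -/

import Mathlib

open CategoryTheory CategoryTheory.Limits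

universe v u₁ u₂

/-!
Since `H` is left Kan extended from `C`, it is the colimit of the representables `y(ιU)` over all
maps `y(ιU) ⟶ H` with `U` in `C`. Colimits of presheaves are universal, so `F ×_G H` is the colimit
of the presheaves `F ×_G y(ιU)`. Each of these is left Kan extended from `C`, and left Kan
extensions are stable under colimits which restriction along `ι` preserves.

The indexing category of these colimits is as large as `C`, so `Type v` need not have all colimits
of that shape. Evaluation at an object still preserves the existing ones, being left adjoint to the
formation of powers indexed by `Hom`-sets.
-/

section UniversalColimits

universe w' w

variable {J : Type w'} [Category.{w} J]

section Types

variable {K K' : J ⥤ Type v} {c : Cocone K} {c' : Cocone K'} {α : K' ⟶ K}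

/-- A cocone `s` over `K'`, encoded as a cocone over `K` with point the relations between `c'.pt`
and `s.pt`: an element `y` of `K.obj j` is sent to the relation which its fibre under `α` spans. If
`c` is a colimit, this produces a map out of `c.pt`, from which one out of `c'.pt` is read off. -/
def relationCocone (hα : α.Equifibered) (c' s : Cocone K') : Cocone K where
  pt := c'.pt → s.pt → Prop
  ι.app j := ↾fun y x z ↦ ∃ y' : K'.obj j, α.app j y' = y ∧ c'.ι.app j y' = x ∧ s.ι.app j y' = z
  ι.naturality j j' a := by
    ext y
    funext x z
    refine propext ⟨?_, ?_⟩
    · rintro ⟨y', hy', rfl, rfl⟩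
      obtain ⟨y'', rfl, h⟩ := Types.exists_of_isPullback (hα a) y' y hy'
      exact ⟨y'', h, by simp, by simp⟩
    · rintro ⟨y', rfl, rfl, rfl⟩
      exact ⟨K'.map a y', NatTrans.naturality_apply α a y', by simp, by simp⟩

lemma exists_ι_app_eq_of_isPullback (hc : IsColimit c) {f : c'.pt ⟶ c.pt}
    (hpb : ∀ j, IsPullback (c'.ι.app j) (α.app j) f (c.ι.app j)) (x : c'.pt) :
    ∃ (j : J) (y : K'.obj j), c'.ι.app j y = x := by
  obtain ⟨j, y, hy⟩ := Types.jointly_surjective K hc (f x)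
  obtain ⟨y', hy', -⟩ := Types.exists_of_isPullback (hpb j) x y hy.symm
  exact ⟨j, y', hy'⟩

lemma desc_relationCocone_ι_app_iff (hc : IsColimit c) (hα : α.Equifibered) {f : c'.pt ⟶ c.pt}
    (hpb : ∀ j, IsPullback (c'.ι.app j) (α.app j) f (c.ι.app j)) {s : Cocone K'} {j : J}
    (y : K'.obj j) (z : s.pt) :
    (hc.desc (relationCocone hα c' s) (f (c'.ι.app j y)) : c'.pt → s.pt → Prop)
      (c'.ι.app j y) z ↔ s.ι.app j y = z := by
  have comm : f (c'.ι.app j y) = c.ι.app j (α.app j y) := ConcreteCategory.congr_hom (hpb j).w y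
  rw [comm, ← ConcreteCategory.comp_apply, hc.fac]
  refine ⟨?_, fun h ↦ ⟨y, rfl, rfl, h⟩⟩
  rintro ⟨y', h, h', rfl⟩
  rw [Types.ext_of_isPullback (hpb j) h' h]

lemma exists_desc_of_isPullback (hc : IsColimit c) (hα : α.Equifibered) {f : c'.pt ⟶ c.pt}
    (hpb : ∀ j, IsPullback (c'.ι.app j) (α.app j) f (c.ι.app j)) (s : Cocone K') :
    ∃ g : c'.pt → s.pt, ∀ j (y : K'.obj j), g (c'.ι.app j y) = s.ι.app j y := by
  have exists_rel (x : c'.pt) :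
      ∃ z, (hc.desc (relationCocone hα c' s) (f x) : c'.pt → s.pt → Prop) x z := by
    obtain ⟨j, y, rfl⟩ := exists_ι_app_eq_of_isPullback hc hpb x
    exact ⟨_, (desc_relationCocone_ι_app_iff hc hα hpb y _).2 rfl⟩
  choose g hg using exists_rel
  exact ⟨g, fun j y ↦ ((desc_relationCocone_ι_app_iff hc hα hpb y _).1 (hg _)).symm⟩

lemma isUniversalColimit_types (hc : IsColimit c) : IsUniversalColimit c := by
  intro K' c' α f _ hα hpb
  choose desc fac using exists_desc_of_isPullback hc hα hpb
  exact ⟨{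
    desc s := ↾desc s
    fac s j := by
      ext y
      exact fac s j y
    uniq s m hm := by
      ext x
      obtain ⟨j, y, rfl⟩ := exists_ι_app_eq_of_isPullback hc hpb x
      exact (ConcreteCategory.congr_hom (hm j) y).trans (fac s j y).symm }⟩

end Types

lemma isUniversalColimit_of_evaluation {A E : Type*} [Category* A] [Category* E] [HasPullbacks E]
    {K : J ⥤ A ⥤ E} {c : Cocone K}
    (hc : ∀ X : A, IsUniversalColimit (((evaluation A E).obj X).mapCocone c)) :
    IsUniversalColimit c := fun _ c' α f comm hα hpb ↦
  ⟨evaluationJointlyReflectsColimits c' fun X ↦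
    (hc X (((evaluation A E).obj X).mapCocone c') (Functor.whiskerRight α _) (f.app X)
      (NatTrans.ext (funext fun j ↦ NatTrans.congr_app (NatTrans.congr_app comm j) X))
      (hα.whiskerRight _)
      fun j ↦ (hpb j).map ((evaluation A E).obj X)).some⟩

lemma isUniversalColimit_functorToTypes {A : Type u₁} [Category.{v} A] {K : J ⥤ A ⥤ Type v}
    {c : Cocone K} (hc : IsColimit c) : IsUniversalColimit c :=
  isUniversalColimit_of_evaluation fun X ↦
    isUniversalColimit_types (isColimitOfPreserves ((evaluation A (Type v)).obj X) hc)

end UniversalColimits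

section BaseChange

variable {E : Type*} [Category* E] [HasPullbacks E] {X S Y Y' Y'' : E}

/-- The map `pullback f h' ⟶ pullback f h` induced by a morphism `k` from `h'` to `h` over `S`: the
functoriality of base change along `f`, with the base-changed object as second argument. -/
noncomputable def pullbackMapRight (f : X ⟶ S) {h' : Y' ⟶ S} {h : Y ⟶ S} (k : Y' ⟶ Y)
    (w : k ≫ h = h') : pullback f h' ⟶ pullback f h :=
  pullback.lift (pullback.fst f h') (pullback.snd f h' ≫ k)
    (by rw [pullback.condition, Category.assoc, w])

lemma pullbackMapRight_id (f : X ⟶ S) (h : Y ⟶ S) :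
    pullbackMapRight f (𝟙 Y) (Category.id_comp h) = 𝟙 (pullback f h) := by
  ext <;> simp [pullbackMapRight]

lemma pullbackMapRight_comp (f : X ⟶ S) {h'' : Y'' ⟶ S} {h' : Y' ⟶ S} {h : Y ⟶ S}
    {k' : Y'' ⟶ Y'} {k : Y' ⟶ Y} (w' : k' ≫ h' = h'') (w : k ≫ h = h') :
    pullbackMapRight f (k' ≫ k) (by rw [Category.assoc, w, w']) =
      pullbackMapRight f k' w' ≫ pullbackMapRight f k w := by
  ext <;> simp only [pullbackMapRight, Category.assoc, pullback.lift_fst, pullback.lift_snd,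
    pullback.lift_snd_assoc]

lemma isPullback_pullbackMapRight (f : X ⟶ S) {h' : Y' ⟶ S} {h : Y ⟶ S} (k : Y' ⟶ Y)
    (w : k ≫ h = h') :
    IsPullback (pullbackMapRight f k w) (pullback.snd f h') (pullback.snd f h) k := by
  refine .of_right ?_ (pullback.lift_snd _ _ _) (.of_hasPullback f h)
  rw [pullbackMapRight, pullback.lift_fst, w]
  exact .of_hasPullback f h'

variable {J : Type*} [Category* J] {K : J ⥤ E}

/-- The base change along `f` of the diagram over `S` obtained from a cocone `c` over `K` and a map
`h` from its point to `S`. -/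
noncomputable def baseChangeDiagram (f : X ⟶ S) (c : Cocone K) (h : c.pt ⟶ S) : J ⥤ E where
  obj j := pullback f (c.ι.app j ≫ h)
  map a := pullbackMapRight f (K.map a) (c.w_assoc a h)
  map_id j := by
    simp only [K.map_id]
    exact pullbackMapRight_id f _
  map_comp a b := by
    simp only [K.map_comp]
    exact pullbackMapRight_comp f _ _

/-- The base change along `f` of the cocone `c`, regarded as a cocone over `S` by `h`. -/
noncomputable def baseChangeCocone (f : X ⟶ S) (c : Cocone K) (h : c.pt ⟶ S) :
    Cocone (baseChangeDiagram f c h) where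
  pt := pullback f h
  ι.app j := pullbackMapRight f (c.ι.app j) rfl
  ι.naturality j j' a := by
    refine (pullbackMapRight_comp f (c.w_assoc a h) rfl).symm.trans ?_
    simp only [c.w]
    exact (Category.comp_id _).symm

/-- The projection from the base change of the diagram `K` back to `K`. -/
noncomputable def baseChangeDiagramSnd (f : X ⟶ S) (c : Cocone K) (h : c.pt ⟶ S) :
    baseChangeDiagram f c h ⟶ K where
  app j := pullback.snd f (c.ι.app j ≫ h)
  naturality _ _ a := (isPullback_pullbackMapRight f (K.map a) (c.w_assoc a h)).w

lemma equifibered_baseChangeDiagramSnd (f : X ⟶ S) (c : Cocone K) (h : c.pt ⟶ S) :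
    (baseChangeDiagramSnd f c h).Equifibered :=
  fun _ _ a ↦ isPullback_pullbackMapRight f (K.map a) (c.w_assoc a h)

lemma nonempty_isColimit_baseChangeCocone {c : Cocone K} (hc : IsUniversalColimit c) (f : X ⟶ S)
    (h : c.pt ⟶ S) : Nonempty (IsColimit (baseChangeCocone f c h)) :=
  have hpb (j : J) := isPullback_pullbackMapRight f (h := h) (c.ι.app j) rfl
  hc _ (baseChangeDiagramSnd f c h) (pullback.snd f h)
    (NatTrans.ext (funext fun j ↦ (hpb j).w.symm))
    (equifibered_baseChangeDiagramSnd f c h) hpb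

end BaseChange

section ColimitsOfKanExtensions

variable {A B E J : Type*} [Category* A] [Category* B] [Category* E] [Category* J] {L : A ⥤ B}

lemma isLeftKanExtension_of_existsUnique {F : A ⥤ E} {F' : B ⥤ E} (α : F ⟶ L ⋙ F')
    (h : ∀ (G : B ⥤ E) (β : F ⟶ L ⋙ G), ∃! γ : F' ⟶ G, α ≫ Functor.whiskerLeft L γ = β) :
    F'.IsLeftKanExtension α := by
  choose desc fac uniq using fun Q : L.LeftExtension F ↦ h Q.right Q.hom
  exact ⟨⟨IsInitial.ofUniqueHom (fun Q ↦ StructuredArrow.homMk (desc Q) (fac Q))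
    fun Q m ↦ StructuredArrow.ext _ _ (uniq Q m.right (StructuredArrow.w m))⟩⟩

lemma isLeftKanExtension_of_isColimit {K₀ : J ⥤ A ⥤ E} {K : J ⥤ B ⥤ E} {c₀ : Cocone K₀}
    {c : Cocone K} (hc₀ : IsColimit c₀) (hc : IsColimit c)
    (α : K₀ ⟶ K ⋙ (Functor.whiskeringLeft A B E).obj L) (β : c₀.pt ⟶ L ⋙ c.pt)
    (comm : ∀ j, c₀.ι.app j ≫ β = α.app j ≫ Functor.whiskerLeft L (c.ι.app j))
    (hα : ∀ j, (K.obj j).IsLeftKanExtension (α.app j)) :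
    c.pt.IsLeftKanExtension β := by
  refine isLeftKanExtension_of_existsUnique β fun G γ ↦ ?_
  have fac_iff (δ : c.pt ⟶ G) : β ≫ Functor.whiskerLeft L δ = γ ↔
      ∀ j, c.ι.app j ≫ δ = (K.obj j).descOfIsLeftKanExtension (α.app j) G (c₀.ι.app j ≫ γ) := by
    refine ⟨?_, fun h ↦ hc₀.hom_ext fun j ↦ ?_⟩
    · rintro rfl j
      refine (K.obj j).hom_ext_of_isLeftKanExtension (α.app j) _ _ ?_
      rw [Functor.descOfIsLeftKanExtension_fac, Functor.whiskerLeft_comp, ← reassoc_of% comm j]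
    · rw [reassoc_of% comm j, ← Functor.whiskerLeft_comp, h, Functor.descOfIsLeftKanExtension_fac]
  let descCocone : Cocone K :=
    { pt := G
      ι.app j := (K.obj j).descOfIsLeftKanExtension (α.app j) G (c₀.ι.app j ≫ γ)
      ι.naturality j j' a := by
        refine (K.obj j).hom_ext_of_isLeftKanExtension (α.app j) _ _ ?_
        have nat : K₀.map a ≫ α.app j' = α.app j ≫ Functor.whiskerLeft L (K.map a) :=
          α.naturality a
        calc
          _ = K₀.map a ≫ α.app j' ≫ Functor.whiskerLeft L _ := by
            rw [Functor.whiskerLeft_comp, reassoc_of% nat]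
          _ = c₀.ι.app j ≫ γ := by
            rw [Functor.descOfIsLeftKanExtension_fac, c₀.w_assoc]
          _ = _ := (Functor.descOfIsLeftKanExtension_fac ..).symm.trans
            (congrArg (fun δ ↦ α.app j ≫ Functor.whiskerLeft L δ) (Category.comp_id _).symm) }
  simp only [fac_iff]
  exact ⟨hc.desc descCocone, hc.fac descCocone, fun δ ↦ hc.uniq descCocone δ⟩

lemma preservesColimit_whiskeringLeft {K : J ⥤ B ⥤ E} (L : A ⥤ B)
    [∀ X : A, PreservesColimit K ((evaluation B E).obj (L.obj X))] :
    PreservesColimit K ((Functor.whiskeringLeft A B E).obj L) where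
  preserves {c} hc := ⟨evaluationJointlyReflectsColimits _ fun X ↦
    show IsColimit (((evaluation B E).obj (L.obj X)).mapCocone c) from isColimitOfPreserves _ hc⟩

end ColimitsOfKanExtensions

section Density

variable {C : Type u₁} {D : Type u₂} [Category.{v} C] [Category.{v} D] {ι : C ⥤ D}
  {P : Dᵒᵖ ⥤ Type v} (s : Cocone (CostructuredArrow.proj (ι ⋙ yoneda) P ⋙ ι ⋙ yoneda))

/-- The section of `s.pt` corresponding by the Yoneda lemma to the leg of `s` at the map
`y(ιU) ⟶ P` classified by `x`. -/
def sectionOfCocone {U : C} (x : P.obj (.op (ι.obj U))) : s.pt.obj (.op (ι.obj U)) :=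
  yonedaEquiv (X := ι.obj U) (s.ι.app (.mk (S := ι ⋙ yoneda) (yonedaEquiv.symm x)))

lemma sectionOfCocone_yonedaEquiv {U : C} (g : yoneda.obj (ι.obj U) ⟶ P) :
    sectionOfCocone s (yonedaEquiv g) =
      yonedaEquiv (X := ι.obj U) (s.ι.app (.mk (S := ι ⋙ yoneda) g)) := by
  rw [sectionOfCocone, Equiv.symm_apply_apply]

lemma sectionOfCocone_map {U V : C} (a : V ⟶ U) (x : P.obj (.op (ι.obj U))) :
    sectionOfCocone s (P.map (ι.map a).op x) = s.pt.map (ι.map a).op (sectionOfCocone s x) := by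
  obtain ⟨g, rfl⟩ := yonedaEquiv.surjective x
  have leg_comp := s.w (CostructuredArrow.homMk a rfl :
    CostructuredArrow.mk (S := ι ⋙ yoneda) (yoneda.map (ι.map a) ≫ g) ⟶ .mk g)
  rw [yonedaEquiv_naturality, sectionOfCocone_yonedaEquiv, sectionOfCocone_yonedaEquiv, ← leg_comp]
  exact (yonedaEquiv_naturality _ _).symm

/-- The map between restrictions to `C` which a cocone `s` on the representables `y(ιU)` over `P`
amounts to: cocones correspond to maps `ι.op ⋙ P ⟶ ι.op ⋙ s.pt`, so that the universal property of
`P` as a left Kan extension becomes that of a colimit of representables. -/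
def restrictionHomOfCocone : ι.op ⋙ P ⟶ ι.op ⋙ s.pt where
  app _ := ↾sectionOfCocone s
  naturality _ _ a := by
    ext x
    exact sectionOfCocone_map s a.unop x

variable {s} in
lemma whiskerLeft_eq_restrictionHomOfCocone_iff {δ : P ⟶ s.pt} :
    Functor.whiskerLeft ι.op δ = restrictionHomOfCocone s ↔
      ∀ g : CostructuredArrow (ι ⋙ yoneda) P, g.hom ≫ δ = s.ι.app g := by
  have app_iff (U : C) (g : yoneda.obj (ι.obj U) ⟶ P) :
      δ.app (.op (ι.obj U)) (yonedaEquiv g) = sectionOfCocone s (yonedaEquiv g) ↔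
        g ≫ δ = s.ι.app (.mk (S := ι ⋙ yoneda) g) := by
    rw [sectionOfCocone_yonedaEquiv, ← yonedaEquiv_comp]
    exact yonedaEquiv.apply_eq_iff_eq
  refine ⟨fun h g ↦ (app_iff g.left g.hom).1 ?_, fun h ↦ ?_⟩
  · exact ConcreteCategory.congr_hom (NatTrans.congr_app h (.op g.left)) (yonedaEquiv g.hom)
  · ext U x
    obtain ⟨g, rfl⟩ := (yonedaEquiv (X := ι.obj U.unop)).surjective x
    exact (app_iff U.unop g).2 (h (.mk (S := ι ⋙ yoneda) g))

/-- A presheaf `P` left Kan extended along `ι` is the colimit of the representables `y(ιU)` over it.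
The legs `𝟙 ≫ g.hom` of the cocone in `Functor.DenseAt` agree definitionally with `g.hom`. -/
noncomputable def denseAtOfIsLeftKanExtension (ι : C ⥤ D) (P : Dᵒᵖ ⥤ Type v)
    [P.IsLeftKanExtension (𝟙 (ι.op ⋙ P))] : (ι ⋙ yoneda).DenseAt P where
  desc s := P.descOfIsLeftKanExtension (𝟙 (ι.op ⋙ P)) s.pt (restrictionHomOfCocone s)
  fac _ := whiskerLeft_eq_restrictionHomOfCocone_iff.1 (P.descOfIsLeftKanExtension_fac ..)
  uniq _ _ hm := P.hom_ext_of_isLeftKanExtension (𝟙 (ι.op ⋙ P)) _ _ <|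
    (whiskerLeft_eq_restrictionHomOfCocone_iff.2 hm).trans
      (P.descOfIsLeftKanExtension_fac ..).symm

end Density

theorem pullback_isLeftKanExtension_general {C : Type u₁} {D : Type u₂}
    [Category.{v} C] [Category.{v} D] (ι : C ⥤ D) {F G H : Dᵒᵖ ⥤ Type v} (f : F ⟶ G) (h : H ⟶ G)
    (hH : H.IsLeftKanExtension (𝟙 (ι.op ⋙ H)))
    (hF : ∀ (U : C) (x : yoneda.obj (ι.obj U) ⟶ H),
      (pullback f (x ≫ h)).IsLeftKanExtension (𝟙 (ι.op ⋙ pullback f (x ≫ h)))) :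
    (pullback f h).IsLeftKanExtension (𝟙 (ι.op ⋙ pullback f h)) := by
  have huniv := isUniversalColimit_functorToTypes (denseAtOfIsLeftKanExtension ι H)
  obtain ⟨hcolim⟩ := nonempty_isColimit_baseChangeCocone huniv f h
  obtain ⟨hrestr⟩ := (preservesColimit_whiskeringLeft ι.op).preserves hcolim
  exact isLeftKanExtension_of_isColimit hrestr hcolim (𝟙 _) (𝟙 _)
    (fun j ↦ (Category.comp_id _).trans (Category.id_comp _).symm) fun g ↦ hF g.left _

/--
Let `ι : C ⥤ D` be a fully faithful functor. A presheaf `P : Dᵒᵖ ⥤ Type v` is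
"left Kan extended from `C`" if `P`, equipped with the identity natural
transformation on `ι.op ⋙ P`, is a left Kan extension of `ι.op ⋙ P` along `ι.op`.
Given natural transformations `f : F ⟶ G` and `h : H ⟶ G` of presheaves on `D`,
if `H` is left Kan extended from `C` and, for every `U : C` and every map
`σ : yoneda.obj (ι.obj U) ⟶ G`, the pullback `F ×_G y(ιU)` is left Kan extended
from `C`, then the pullback `F ×_G H` is left Kan extended from `C`.
-/
theorem pullback_isLeftKanExtension {C : Type u₁} {D : Type u₂}
    [Category.{v} C] [Category.{v} D]
    (ι : C ⥤ D) (hι : ι.FullyFaithful)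
    (F G H : Dᵒᵖ ⥤ Type v) (f : F ⟶ G) (h : H ⟶ G)
    (hH : H.IsLeftKanExtension (𝟙 (ι.op ⋙ H)))
    (hF : ∀ (U : C) (σ : yoneda.obj (ι.obj U) ⟶ G),
      (pullback f σ).IsLeftKanExtension (𝟙 (ι.op ⋙ pullback f σ))) :
    (pullback f h).IsLeftKanExtension (𝟙 (ι.op ⋙ pullback f h)) :=
  pullback_isLeftKanExtension_general ι f h hH fun U x ↦ hF U (x ≫ h)
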